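/- arXiv:2410.23993 — 4 statements merged into one kernel-verified Lean document; each statement's English description precedes it below -/
import Mathlib

section
/- There exists an absolute constant C > 0 with the following property. Let q ≥ 1 and let d, N ∈ ℕ satisfy N^{−11} ≤ κ_q(d,N) ≤ e^{−12/q}. Then for every integer k > 1, the number of points x ∈ B_N^q ∩ ℤ^d such that |{i ∈ [d] : |x_i| = k}| ≥ κ_q(d,N)^{q/22}·N^q / k^6 is at most C·N^{−2q}·|B_N^q ∩ ℤ^d|. -/
open Classical in
noncomputable def latticeBall (q : ℝ) (d : ℕ) (t : ℝ) : Finset (Fin d → ℤ) :=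
  (Finset.Icc (fun _ => -(⌈t⌉₊ : ℤ)) (fun _ => (⌈t⌉₊ : ℤ))).filter
    (fun x => ∑ i, |(x i : ℝ)| ^ q ≤ t ^ q)

lemma mem_lb {q : ℝ} (hq : 1 ≤ q) {d N : ℕ} (x : Fin d → ℤ) :
    x ∈ latticeBall q d N ↔ ∑ i, |(x i : ℝ)| ^ q ≤ (N : ℝ) ^ q := by
  classical
  unfold latticeBall
  rw [Finset.mem_filter]
  refine ⟨fun h => h.2, fun h => ⟨?_, h⟩⟩
  have hb : ∀ i, |x i| ≤ (N : ℤ) := by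
    intro i
    have h1 : |(x i : ℝ)| ^ q ≤ (N : ℝ) ^ q :=
      (Finset.single_le_sum (f := fun i => |(x i : ℝ)| ^ q)
        (fun j _ => Real.rpow_nonneg (abs_nonneg _) _) (Finset.mem_univ i)).trans h
    have h2 := (Real.rpow_le_rpow_iff (abs_nonneg _) (Nat.cast_nonneg N)
      (by linarith : (0 : ℝ) < q)).1 h1
    exact_mod_cast h2
  rw [Finset.mem_Icc]
  simp only [Nat.ceil_natCast]
  exact ⟨fun i => (abs_le.1 (hb i)).1, fun i => (abs_le.1 (hb i)).2⟩

open Classical in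
/-- zero out the coordinates of absolute value k -/
noncomputable def zeroOut {d : ℕ} (k : ℕ) (x : Fin d → ℤ) : Fin d → ℤ :=
  fun i => if |x i| = (k : ℤ) then 0 else x i

open Classical in
noncomputable def kset {d : ℕ} (k : ℕ) (x : Fin d → ℤ) : Finset (Fin d) :=
  Finset.univ.filter (fun i => |x i| = (k : ℤ))

open Classical in
noncomputable def Aset (q : ℝ) (d N k n : ℕ) : Finset (Fin d → ℤ) :=
  (latticeBall q d N).filter (fun x => (kset k x).card = n)

open Classical in
noncomputable def Yset (q : ℝ) (d N k n : ℕ) : Finset (Fin d → ℤ) :=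
  (latticeBall q d N).filter
    (fun y => ∑ i, |(y i : ℝ)| ^ q + (n * k : ℕ) ≤ (N : ℝ) ^ q)

lemma k_le_rpow {q : ℝ} (hq : 1 ≤ q) {k : ℕ} (hk : 1 < k) : (k : ℝ) ≤ (k : ℝ) ^ q := by
  have : (1 : ℝ) ≤ k := by exact_mod_cast hk.le
  simpa using Real.rpow_le_rpow_of_exponent_le this hq

lemma zeroOut_sum {q : ℝ} (hq : 1 ≤ q) {d k : ℕ} (hk : 1 < k) (x : Fin d → ℤ) :
    ∑ i, |(zeroOut k x i : ℝ)| ^ q + ((kset k x).card * k : ℕ) ≤ ∑ i, |(x i : ℝ)| ^ q := by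
  classical
  have h1 : (((kset k x).card * k : ℕ) : ℝ) = ∑ i, if |x i| = (k : ℤ) then (k : ℝ) else 0 := by
    unfold kset
    rw [← Finset.sum_filter]
    simp
  rw [h1, ← Finset.sum_add_distrib]
  refine Finset.sum_le_sum fun i _ => ?_
  unfold zeroOut
  split_ifs with h
  · have : |(x i : ℝ)| = k := by exact_mod_cast h
    rw [this]
    have := k_le_rpow hq hk
    simpa [Real.zero_rpow (by linarith : q ≠ 0)] using this
  · simp

lemma step1 {q : ℝ} (hq : 1 ≤ q) (d N n : ℕ) {k : ℕ} (hk : 1 < k) :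
    (Aset q d N k n).card ≤ (Yset q d N k n).card * d.choose n * 2 ^ n := by
  classical
  have hc : (((Yset q d N k n) ×ˢ (Finset.powersetCard n (Finset.univ : Finset (Fin d)))).sigma
      (fun p => p.2.powerset)).card = (Yset q d N k n).card * d.choose n * 2 ^ n := by
    rw [Finset.card_sigma]
    rw [Finset.sum_congr rfl (g := fun _ => 2 ^ n)]
    · simp [Finset.card_product, Finset.card_powersetCard]
    · intro p hp
      rw [Finset.card_powerset, (Finset.mem_powersetCard.1 (Finset.mem_product.1 hp).2).2]
  rw [← hc]
  apply Finset.card_le_card_of_injOn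
    (fun x => ⟨(zeroOut k x, kset k x), (kset k x).filter (fun i => x i = (k : ℤ))⟩)
  · intro x hx
    have hx' := Finset.mem_filter.1 (Finset.mem_coe.1 hx)
    have hb := (mem_lb hq x).1 hx'.1
    have hz := zeroOut_sum hq hk x
    rw [hx'.2] at hz
    have hp : (0 : ℝ) ≤ (n * k : ℕ) := Nat.cast_nonneg _
    simp only [Finset.coe_sigma, Set.mem_sigma_iff, Finset.mem_coe, Finset.mem_product,
      Finset.mem_powersetCard, Finset.mem_powerset]
    refine ⟨⟨?_, Finset.subset_univ _, hx'.2⟩, Finset.filter_subset _ _⟩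
    unfold Yset
    rw [Finset.mem_filter, mem_lb hq]
    exact ⟨by linarith, by linarith⟩
  · intro x hx x' hx' h
    simp only [Sigma.mk.injEq, Prod.mk.injEq] at h
    obtain ⟨⟨h1, h2⟩, h3⟩ := h
    have h3' := eq_of_heq h3
    funext i
    have e1 := congrFun h1 i
    have e2 := Finset.ext_iff.1 h2 i
    have e3 := Finset.ext_iff.1 h3' i
    simp only [kset, zeroOut, Finset.mem_filter, Finset.mem_univ, true_and] at e1 e2 e3
    by_cases c : |x i| = (k : ℤ)
    · have c' := e2.1 c
      simp only [c, c', true_and] at e3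
      rcases (abs_eq (by positivity)).1 c with a | a <;>
      rcases (abs_eq (by positivity)).1 c' with b | b
      · omega
      · have := e3.1 a; omega
      · have := e3.2 b; omega
      · omega
    · have c' : ¬ |x' i| = (k : ℤ) := fun h => c (e2.2 h)
      simpa [c, c'] using e1

lemma one_le_rpow_abs {q : ℝ} (hq : 1 ≤ q) {a : ℤ} (ha : a ≠ 0) : (1 : ℝ) ≤ |(a : ℝ)| ^ q := by
  apply Real.one_le_rpow _ (by linarith)
  have := Int.one_le_abs ha
  exact_mod_cast this

open Classical in
lemma card_ne_zero_le {q : ℝ} (hq : 1 ≤ q) {d N : ℕ} {x : Fin d → ℤ}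
    (hx : x ∈ latticeBall q d N) :
    (Finset.univ.filter (fun i => x i ≠ 0)).card ≤ ⌊(N : ℝ) ^ q⌋₊ := by
  apply Nat.le_floor
  rw [mem_lb hq] at hx
  refine le_trans ?_ hx
  rw [Finset.card_filter]
  push_cast
  refine Finset.sum_le_sum fun i _ => ?_
  split_ifs with h
  · exact one_le_rpow_abs hq h
  · positivity

lemma step2 {q : ℝ} (hq : 1 ≤ q) (d N n k : ℕ) :
    (Yset q d N k n).card * (d - ⌊(N : ℝ) ^ q⌋₊).choose (n * k) ≤
      (latticeBall q d N).card * (⌊(N : ℝ) ^ q⌋₊).choose (n * k) := by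
  classical
  set M := ⌊(N : ℝ) ^ q⌋₊ with hM
  set s := n * k with hs
  let Z : (Fin d → ℤ) → Finset (Fin d) := fun y => Finset.univ.filter (fun i => y i = 0)
  let O : (Fin d → ℤ) → Finset (Fin d) := fun y => Finset.univ.filter (fun i => y i ≠ 0)
  have hL : (Yset q d N k n).card * (d - M).choose s ≤
      ((Yset q d N k n).sigma (fun y => Finset.powersetCard s (Z y))).card := by
    rw [Finset.card_sigma, ← smul_eq_mul]
    apply Finset.card_nsmul_le_sum
    intro y hy
    rw [Finset.card_powersetCard]
    apply Nat.choose_le_choose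
    have h1 := card_ne_zero_le hq (Finset.mem_filter.1 hy).1
    have h2 := Finset.card_filter_add_card_filter_not (s := (Finset.univ : Finset (Fin d)))
      (fun i => y i = 0)
    simp only [Finset.card_univ, Fintype.card_fin] at h2
    show d - M ≤ (Finset.univ.filter (fun i => y i = 0)).card
    have h1' : (Finset.univ.filter (fun i => ¬ y i = 0)).card ≤ M := h1
    omega
  have hR : ((latticeBall q d N).sigma (fun y => Finset.powersetCard s (O y))).card ≤
      (latticeBall q d N).card * M.choose s := by
    rw [Finset.card_sigma, ← smul_eq_mul]
    apply Finset.sum_le_card_nsmul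
    intro y hy
    rw [Finset.card_powersetCard]
    exact Nat.choose_le_choose _ (card_ne_zero_le hq hy)
  refine hL.trans (le_trans ?_ hR)
  apply Finset.card_le_card_of_injOn
    (fun p => ⟨fun i => if i ∈ p.2 then 1 else p.1 i, p.2⟩)
  · rintro ⟨y, T⟩ hp
    simp only [Finset.coe_sigma, Set.mem_sigma_iff, Finset.mem_coe,
      Finset.mem_powersetCard] at hp ⊢
    obtain ⟨hy, hT, hc⟩ := hp
    refine ⟨?_, ?_, hc⟩
    · rw [mem_lb hq]
      refine le_trans ?_ (Finset.mem_filter.1 hy).2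
      rw [← hs, ← hc]
      have h1 : ((T.card : ℕ) : ℝ) = ∑ i, if i ∈ T then (1 : ℝ) else 0 := by simp
      rw [h1, ← Finset.sum_add_distrib]
      refine Finset.sum_le_sum fun i _ => ?_
      split_ifs with h
      · have : (0 : ℝ) ≤ |(y i : ℝ)| ^ q := by positivity
        simpa using this
      · simp
    · intro i hi
      simp [O, hi]
  · rintro ⟨y, T⟩ hp ⟨y', T'⟩ hp' h
    simp only [Finset.coe_sigma, Set.mem_sigma_iff, Finset.mem_coe,
      Finset.mem_powersetCard] at hp hp'
    simp only [Sigma.mk.injEq] at h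
    obtain ⟨h1, h2⟩ := h
    have h2' := eq_of_heq h2
    subst h2'
    have : y = y' := by
      funext i
      by_cases hi : i ∈ T
      · have a := (Finset.mem_filter.1 (hp.2.1 hi)).2
        have b := (Finset.mem_filter.1 (hp'.2.1 hi)).2
        rw [a, b]
      · simpa [hi] using congrFun h1 i
    subst this
    rfl

/-- the purely analytic estimate -/
lemma analytic {δ : ℝ} (h0 : 0 < δ) (h1 : δ ≤ Real.exp (-(6 / 11))) {k : ℕ} (hk : 2 ≤ k)
    {r : ℝ} (hr : r ≤ (k : ℝ) ^ 6 / δ ^ 23) :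
    2 * Real.exp 1 * r * (4 / 3 * δ ^ 22) ^ k ≤ Real.exp (-k) := by
  have hk' : (2 : ℝ) ≤ k := by exact_mod_cast hk
  obtain ⟨e, he⟩ : ∃ e : ℕ, 22 * k = 23 + e := ⟨22 * k - 23, by omega⟩
  have he' : (e : ℝ) = 22 * k - 23 := by
    have : (22 * k : ℝ) = 23 + e := by exact_mod_cast he
    linarith
  have hpow : (4 / 3 * δ ^ 22) ^ k = (4 / 3) ^ k * δ ^ 23 * δ ^ e := by
    rw [mul_pow, ← pow_mul, he, pow_add]; ring
  have hδe : δ ^ e ≤ Real.exp (-12 * k + 138 / 11) := by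
    calc δ ^ e ≤ (Real.exp (-(6 / 11))) ^ e := by gcongr
      _ = Real.exp (-12 * k + 138 / 11) := by
        rw [← Real.exp_nat_mul, he']; congr 1; ring
  have hk6 : (k : ℝ) ^ 6 ≤ 64 * Real.exp (3 * k - 6) := by
    have : (k : ℝ) / 2 ≤ Real.exp ((k - 2) / 2) := by
      have := Real.add_one_le_exp (((k : ℝ) - 2) / 2)
      linarith
    have h6 : ((k : ℝ) / 2) ^ 6 ≤ Real.exp (3 * k - 6) := by
      calc ((k : ℝ) / 2) ^ 6 ≤ (Real.exp ((k - 2) / 2)) ^ 6 := by gcongr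
        _ = _ := by rw [← Real.exp_nat_mul]; congr 1; push_cast; ring
    have : ((k : ℝ) / 2) ^ 6 = (k : ℝ) ^ 6 / 64 := by ring
    rw [this] at h6
    linarith
  have he1 : (2.7 : ℝ) ≤ Real.exp 1 := by have := Real.exp_one_gt_d9; linarith
  have h43 : (4 / 3 : ℝ) ^ k ≤ Real.exp k := by
    calc (4 / 3 : ℝ) ^ k ≤ (Real.exp 1) ^ k := by gcongr; linarith
      _ = _ := by rw [← Real.exp_nat_mul]; simp
  have h128 : (128 : ℝ) ≤ Real.exp 5 := by
    calc (128 : ℝ) ≤ 2.7 ^ 5 := by norm_num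
      _ ≤ (Real.exp 1) ^ 5 := by gcongr
      _ = _ := by rw [← Real.exp_nat_mul]; simp
  have hrd : r * δ ^ 23 ≤ (k : ℝ) ^ 6 := by
    rwa [le_div_iff₀ (by positivity)] at hr
  calc 2 * Real.exp 1 * r * (4 / 3 * δ ^ 22) ^ k
      = 2 * Real.exp 1 * (r * δ ^ 23) * (4 / 3) ^ k * δ ^ e := by rw [hpow]; ring
    _ ≤ 2 * Real.exp 1 * (64 * Real.exp (3 * k - 6)) * Real.exp k *
          Real.exp (-12 * k + 138 / 11) := by
        have := hrd.trans hk6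
        gcongr
    _ = 128 * Real.exp (1 + (3 * k - 6) + k + (-12 * k + 138 / 11)) := by
        simp only [Real.exp_add]; ring
    _ ≤ Real.exp 5 * Real.exp (1 + (3 * k - 6) + k + (-12 * k + 138 / 11)) := by gcongr
    _ = Real.exp (5 + (1 + (3 * k - 6) + k + (-12 * k + 138 / 11))) := by rw [← Real.exp_add]
    _ ≤ Real.exp (-k) := by
        apply Real.exp_le_exp.2
        linarith

lemma An_bound {q : ℝ} (hq : 1 ≤ q) {d N n k : ℕ} (hd : 0 < d) (hn : 0 < n)
    (hk : 1 < k) {δ : ℝ} (h0 : 0 < δ) (h1 : δ ≤ Real.exp (-(6 / 11)))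
    (hX : (N : ℝ) ^ q = δ ^ 22 * d) (hX8 : (N : ℝ) ^ q ≤ d / 8)
    (hT : δ * (N : ℝ) ^ q / (k : ℝ) ^ 6 ≤ n) :
    ((Aset q d N k n).card : ℝ) ≤ Real.exp (-k) ^ n * (latticeBall q d N).card := by
  have hdR : (0 : ℝ) < d := by exact_mod_cast hd
  have hnR : (0 : ℝ) < n := by exact_mod_cast hn
  have hkR : (0 : ℝ) < k := by exact_mod_cast (by omega : 0 < k)
  rcases Finset.eq_empty_or_nonempty (Aset q d N k n) with he | ⟨x, hx⟩
  · rw [he]; simp; positivity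
  have hs : ((n * k : ℕ) : ℝ) ≤ (N : ℝ) ^ q := by
    have hx' := Finset.mem_filter.1 hx
    have h := zeroOut_sum hq hk x
    rw [hx'.2] at h
    have h2 : (0 : ℝ) ≤ ∑ i, |(zeroOut k x i : ℝ)| ^ q := by positivity
    have := (mem_lb hq x).1 hx'.1
    linarith
  have s1 := step1 hq d N n hk
  have s2 := step2 hq d N n k
  set M := ⌊(N : ℝ) ^ q⌋₊ with hM
  set s := n * k with hsdef
  have hMX : (M : ℝ) ≤ (N : ℝ) ^ q := Nat.floor_le (by positivity)
  have hsM : s ≤ M := Nat.le_floor hs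
  have hsum : M + s ≤ d := by
    have : ((M + s : ℕ) : ℝ) ≤ d := by push_cast [hsdef] at hs ⊢; linarith
    exact_mod_cast this
  have hlow : (3 / 4 * (d : ℝ)) ^ s / (s.factorial : ℝ) ≤ ((d - M).choose s : ℝ) := by
    refine le_trans ?_ (Nat.pow_le_choose s (d - M))
    have : (3 / 4 * (d : ℝ)) ≤ ((d - M + 1 - s : ℕ) : ℝ) := by
      have e : d - M + 1 - s + M + s = d + 1 := by omega
      have e' : ((d - M + 1 - s : ℕ) : ℝ) + M + s = d + 1 := by exact_mod_cast e
      linarith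
    gcongr
  have hup : (M.choose s : ℝ) ≤ (δ ^ 22 * d) ^ s / (s.factorial : ℝ) := by
    refine (Nat.choose_le_pow_div s M).trans ?_
    rw [← hX]
    gcongr
  have s2' : ((Yset q d N k n).card : ℝ) * ((d - M).choose s : ℝ) ≤
      (latticeBall q d N).card * (M.choose s : ℝ) := by exact_mod_cast s2
  have hY : ((Yset q d N k n).card : ℝ) ≤ (latticeBall q d N).card * (4 / 3 * δ ^ 22) ^ s := by
    have hpos : 0 < (3 / 4 * (d : ℝ)) ^ s / (s.factorial : ℝ) := by positivity
    refine le_of_mul_le_mul_right ?_ hpos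
    calc ((Yset q d N k n).card : ℝ) * ((3 / 4 * (d : ℝ)) ^ s / (s.factorial : ℝ))
        ≤ ((Yset q d N k n).card : ℝ) * ((d - M).choose s : ℝ) := by gcongr
      _ ≤ (latticeBall q d N).card * (M.choose s : ℝ) := s2'
      _ ≤ (latticeBall q d N).card * ((δ ^ 22 * d) ^ s / (s.factorial : ℝ)) := by gcongr
      _ = (latticeBall q d N).card * (4 / 3 * δ ^ 22) ^ s *
            ((3 / 4 * (d : ℝ)) ^ s / (s.factorial : ℝ)) := by
          have : δ ^ 22 * (d : ℝ) = (4 / 3 * δ ^ 22) * (3 / 4 * d) := by ring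
          rw [this, mul_pow (4 / 3 * δ ^ 22)]; ring
  have hch : (d.choose n : ℝ) ≤ (Real.exp 1 * (d / n)) ^ n := by
    refine (Nat.choose_le_pow_div n d).trans ?_
    have h := Real.pow_div_factorial_le_exp (n : ℝ) hnR.le n
    have h2 : Real.exp (n : ℝ) = Real.exp 1 ^ n := by rw [← Real.exp_nat_mul]; simp
    rw [h2] at h
    calc (d : ℝ) ^ n / (n.factorial : ℝ) = ((n : ℝ) ^ n / (n.factorial : ℝ)) * (d / n) ^ n := by
          rw [div_pow]; field_simp
      _ ≤ Real.exp 1 ^ n * (d / n) ^ n := by gcongr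
      _ = _ := by rw [mul_pow]
  have hr : (d : ℝ) / n ≤ (k : ℝ) ^ 6 / δ ^ 23 := by
    rw [hX, div_le_iff₀ (by positivity)] at hT
    rw [div_le_div_iff₀ hnR (by positivity)]
    nlinarith
  have han := analytic h0 h1 hk hr
  have s1' : ((Aset q d N k n).card : ℝ) ≤ (Yset q d N k n).card * d.choose n * 2 ^ n := by
    exact_mod_cast s1
  calc ((Aset q d N k n).card : ℝ) ≤ (Yset q d N k n).card * d.choose n * 2 ^ n := s1'
    _ ≤ ((latticeBall q d N).card * (4 / 3 * δ ^ 22) ^ s) * (Real.exp 1 * (d / n)) ^ n * 2 ^ n := by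
        gcongr
    _ = (2 * Real.exp 1 * (d / n) * (4 / 3 * δ ^ 22) ^ k) ^ n * (latticeBall q d N).card := by
        rw [hsdef, mul_comm n k, pow_mul]; simp only [mul_pow]; ring
    _ ≤ _ := by gcongr

/-- conversion of the exponential gain to a power gain -/
lemma tail_bound {X δ : ℝ} (hX : 0 < X) (h0 : 0 < δ) (hδX : 1 ≤ δ ^ 2 * X) {n k : ℕ}
    (hn : 0 < n) (hk : 2 ≤ k) (hT : δ * X / (k : ℝ) ^ 6 ≤ n) :
    Real.exp (-k) ^ n ≤ ((Nat.factorial 24 : ℕ) * 2 ^ 24 : ℝ) * (X ^ 2)⁻¹ * Real.exp (-1) ^ n := by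
  have hnR : (1 : ℝ) ≤ n := by exact_mod_cast hn
  have hkR : (2 : ℝ) ≤ k := by exact_mod_cast hk
  set y : ℝ := k * n with hy
  have hy0 : 0 < y := by positivity
  have h1 : δ * X ≤ y ^ 6 := by
    rw [div_le_iff₀ (by positivity)] at hT
    calc δ * X ≤ n ^ 1 * (k : ℝ) ^ 6 := by simpa using hT
      _ ≤ n ^ 6 * (k : ℝ) ^ 6 := by gcongr <;> norm_num [hnR]
      _ = y ^ 6 := by rw [hy]; ring
  have h2 : X ≤ y ^ 12 := by
    calc X ≤ (δ ^ 2 * X) * X := by nlinarith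
      _ = (δ * X) ^ 2 := by ring
      _ ≤ (y ^ 6) ^ 2 := by gcongr
      _ = y ^ 12 := by ring
  have h3 : X ^ 2 ≤ y ^ 24 := by
    calc X ^ 2 ≤ (y ^ 12) ^ 2 := by gcongr
      _ = y ^ 24 := by ring
  have h4 := Real.pow_div_factorial_le_exp (y / 2) (by positivity) 24
  have h5 : Real.exp (-(y / 2)) ≤ ((Nat.factorial 24 : ℕ) * 2 ^ 24 : ℝ) * (X ^ 2)⁻¹ := by
    rw [Real.exp_neg, ← div_eq_mul_inv, inv_le_comm₀ (Real.exp_pos _) (by positivity), inv_div]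
    refine le_trans ?_ h4
    rw [div_pow, div_div, mul_comm (2 ^ 24 : ℝ)]
    gcongr
  calc Real.exp (-k) ^ n = Real.exp (-y) := by
        rw [← Real.exp_nat_mul, hy]; congr 1; ring
    _ ≤ Real.exp (-(y / 2)) * Real.exp (-n) := by
        rw [← Real.exp_add]
        apply Real.exp_le_exp.2
        nlinarith
    _ ≤ _ := by
        have : Real.exp (-n) = Real.exp (-1) ^ n := by rw [← Real.exp_nat_mul]; simp
        rw [this]
        gcongr

open Classical in
theorem stmt7 :
    ∃ C : ℝ, 0 < C ∧ ∀ (q : ℝ), 1 ≤ q → ∀ d N : ℕ, 0 < d → 0 < N →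
      (N : ℝ) ^ (-(11 : ℝ)) ≤ (N : ℝ) / (d : ℝ) ^ (1 / q) →
      (N : ℝ) / (d : ℝ) ^ (1 / q) ≤ Real.exp (-12 / q) →
      ∀ k : ℕ, 1 < k →
      (((latticeBall q d N).filter (fun x =>
          ((N : ℝ) / (d : ℝ) ^ (1 / q)) ^ (q / 22) * (N : ℝ) ^ q / (k : ℝ) ^ 6
            ≤ ((Finset.univ.filter (fun i => |x i| = (k : ℤ))).card : ℝ))).card : ℝ)
        ≤ C * (N : ℝ) ^ (-(2 * q)) * ((latticeBall q d N).card : ℝ) := by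
  have hE1 : Real.exp (-1) < 1 := by simp
  refine ⟨((Nat.factorial 24 : ℕ) * 2 ^ 24 : ℝ) * (1 - Real.exp (-1))⁻¹, ?_, ?_⟩
  · have : 0 < 1 - Real.exp (-1) := by linarith
    positivity
  intro q hq d N hd hN hlo hhi k hk
  have hq0 : 0 < q := by linarith
  have hdR : (0 : ℝ) < d := by exact_mod_cast hd
  have hNR : (0 : ℝ) < N := by exact_mod_cast hN
  have hkR : (0 : ℝ) < k := by exact_mod_cast (by omega : 0 < k)
  set κ : ℝ := (N : ℝ) / (d : ℝ) ^ (1 / q) with hκ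
  have hκ0 : 0 < κ := by positivity
  set X : ℝ := (N : ℝ) ^ q with hXdef
  have hX0 : 0 < X := by positivity
  set δ : ℝ := κ ^ (q / 22) with hδ
  have h0 : 0 < δ := by positivity
  have hδ22 : δ ^ 22 = κ ^ q := by
    rw [hδ, ← Real.rpow_natCast, ← Real.rpow_mul hκ0.le]; congr 1; push_cast; ring
  have hκq : κ ^ q = X / d := by
    rw [hκ, Real.div_rpow hNR.le (by positivity), ← Real.rpow_mul hdR.le]
    simp [hq0.ne', hXdef]
  have hXd : X = δ ^ 22 * d := by rw [hδ22, hκq]; field_simp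
  have h1 : δ ≤ Real.exp (-(6 / 11)) := by
    calc δ ≤ (Real.exp (-12 / q)) ^ (q / 22) := by rw [hδ]; gcongr
      _ = Real.exp (-(6 / 11)) := by rw [← Real.exp_mul]; congr 1; field_simp; norm_num
  have hX8 : X ≤ d / 8 := by
    have : δ ^ 22 ≤ 1 / 8 := by
      calc δ ^ 22 ≤ (Real.exp (-(6 / 11))) ^ 22 := by gcongr
        _ = (Real.exp 12)⁻¹ := by rw [← Real.exp_nat_mul, ← Real.exp_neg]; congr 1; norm_num
        _ ≤ 1 / 8 := by
          rw [one_div]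
          apply inv_anti₀ (by norm_num)
          have := Real.add_one_le_exp (12 : ℝ); linarith
    rw [hXd]; nlinarith
  have hδX : 1 ≤ δ ^ 2 * X := by
    have h : X ^ (-(11 : ℝ)) ≤ δ ^ 22 := by
      rw [hδ22]
      calc X ^ (-(11 : ℝ)) = ((N : ℝ) ^ (-(11 : ℝ))) ^ q := by
            rw [hXdef, ← Real.rpow_mul hNR.le, ← Real.rpow_mul hNR.le]; congr 1; ring
        _ ≤ κ ^ q := by gcongr
    have h' : 1 ≤ (δ ^ 2 * X) ^ 11 := by
      rw [Real.rpow_neg hX0.le] at h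
      have e : X ^ (11 : ℝ) = X ^ 11 := by exact_mod_cast Real.rpow_natCast X 11
      rw [e, inv_le_iff_one_le_mul₀ (by positivity)] at h
      calc 1 ≤ _ := h
        _ = _ := by ring
    by_contra hc
    push Not at hc
    have := pow_lt_one₀ (by positivity) hc (by norm_num : (11 : ℕ) ≠ 0)
    linarith
  have hTpos : 0 < δ * X / (k : ℝ) ^ 6 := by positivity
  set F := (latticeBall q d N).filter (fun x => δ * X / (k : ℝ) ^ 6
            ≤ ((Finset.univ.filter (fun i => |x i| = (k : ℤ))).card : ℝ)) with hF
  set R := (Finset.range (d + 1)).filter (fun n : ℕ => δ * X / (k : ℝ) ^ 6 ≤ (n : ℝ)) with hR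
  have hsub : F ⊆ R.biUnion (fun n => Aset q d N k n) := by
    intro x hx
    have hx' := Finset.mem_filter.1 hx
    refine Finset.mem_biUnion.2 ⟨(kset k x).card, ?_, ?_⟩
    · refine Finset.mem_filter.2 ⟨?_, hx'.2⟩
      have := Finset.card_le_univ (kset k x)
      simp at this
      simp; omega
    · exact Finset.mem_filter.2 ⟨hx'.1, rfl⟩
  have hcard : (F.card : ℝ) ≤ ∑ n ∈ R, ((Aset q d N k n).card : ℝ) := by
    exact_mod_cast (Finset.card_le_card hsub).trans Finset.card_biUnion_le
  have hX2 : (N : ℝ) ^ (-(2 * q)) = (X ^ 2)⁻¹ := by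
    rw [Real.rpow_neg hNR.le, mul_comm, Real.rpow_mul hNR.le]
    congr 1
    exact_mod_cast Real.rpow_natCast X 2
  rw [hX2]
  calc (F.card : ℝ) ≤ ∑ n ∈ R, ((Aset q d N k n).card : ℝ) := hcard
    _ ≤ ∑ n ∈ R, (((Nat.factorial 24 : ℕ) * 2 ^ 24 : ℝ) * (X ^ 2)⁻¹ *
          (latticeBall q d N).card) * Real.exp (-1) ^ n := by
        refine Finset.sum_le_sum fun n hn => ?_
        have hnT := (Finset.mem_filter.1 hn).2
        have hn0 : 0 < n := by
          have : (0 : ℝ) < n := lt_of_lt_of_le hTpos hnT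
          exact_mod_cast this
        refine (An_bound hq hd hn0 hk h0 h1 hXd hX8 hnT).trans ?_
        have := tail_bound hX0 h0 hδX hn0 hk hnT
        calc _ ≤ (((Nat.factorial 24 : ℕ) * 2 ^ 24 : ℝ) * (X ^ 2)⁻¹ * Real.exp (-1) ^ n) *
              (latticeBall q d N).card :=
                mul_le_mul_of_nonneg_right this (Nat.cast_nonneg _)
          _ = _ := by ring
    _ = (((Nat.factorial 24 : ℕ) * 2 ^ 24 : ℝ) * (X ^ 2)⁻¹ *
          (latticeBall q d N).card) * ∑ n ∈ R, Real.exp (-1) ^ n := by rw [Finset.mul_sum]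
    _ ≤ (((Nat.factorial 24 : ℕ) * 2 ^ 24 : ℝ) * (X ^ 2)⁻¹ *
          (latticeBall q d N).card) * (1 - Real.exp (-1))⁻¹ := by
        refine mul_le_mul_of_nonneg_left ?_ (mul_nonneg (mul_nonneg
          (mul_nonneg (Nat.cast_nonneg _) (pow_nonneg zero_le_two _))
          (inv_nonneg.2 (sq_nonneg X))) (Nat.cast_nonneg _))
        rw [← tsum_geometric_of_lt_one (Real.exp_pos _).le hE1]
        exact (summable_geometric_of_lt_one (Real.exp_pos _).le hE1).sum_le_tsum _
          (fun _ _ => by positivity)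
    _ = _ := by ring
end

section
/- There exists an absolute constant C > 0 with the following property. For every q ≥ 1 and all d, N ∈ ℕ satisfying κ_q(d,N) ≤ e^{−12/q}, the number of points x ∈ B_N^q ∩ ℤ^d such that Σ_{i ∈ [d], |x_i| ≥ 2} x_i^4 > κ_q(d,N)^{q/22}·N^q is at most C·N^{−q}·|B_N^q ∩ ℤ^d|. -/
namespace LB

/-- lattice points of the box with budget `τ` -/
noncomputable def BB (q : ℝ) (d N : ℕ) (τ : ℝ) : Finset (Fin d → ℤ) :=
  (Finset.Icc (fun _ => -(N : ℤ)) (fun _ => (N : ℤ))).filter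
    (fun x => ∑ i, |(x i : ℝ)| ^ q ≤ τ)

lemma mem_BB {q : ℝ} {d N : ℕ} {τ : ℝ} {x : Fin d → ℤ} :
    x ∈ BB q d N τ ↔ (∀ i, -(N : ℤ) ≤ x i ∧ x i ≤ N) ∧ ∑ i, |(x i : ℝ)| ^ q ≤ τ := by
  simp only [BB, Finset.mem_filter, Finset.mem_Icc, Pi.le_def, forall_and]

lemma abs_le_rpow {q : ℝ} (hq : 1 ≤ q) (k : ℤ) : |(k : ℝ)| ≤ |(k : ℝ)| ^ q := by
  rcases eq_or_ne k 0 with rfl | hk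
  · simp; rw [Real.zero_rpow (by linarith)]
  · have h1 : (1 : ℝ) ≤ |(k : ℝ)| := by
      have := Int.one_le_abs hk
      exact_mod_cast this
    calc |(k : ℝ)| = |(k : ℝ)| ^ (1 : ℝ) := (Real.rpow_one _).symm
      _ ≤ _ := Real.rpow_le_rpow_of_exponent_le h1 hq

lemma ind_le_rpow {q : ℝ} (hq : 1 ≤ q) (k : ℤ) : (if k = 0 then (0 : ℝ) else 1) ≤ |(k : ℝ)| ^ q := by
  split_ifs with h
  · positivity
  · refine le_trans ?_ (abs_le_rpow hq k)
    have := Int.one_le_abs h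
    exact_mod_cast this

lemma sum_update {d : ℕ} (f : ℤ → ℝ) (x : Fin d → ℤ) (i : Fin d) (k : ℤ) :
    ∑ j, f (Function.update x i k j) = ∑ j, f (x j) - f (x i) + f k := by
  rw [← Finset.add_sum_erase _ _ (Finset.mem_univ i),
    ← Finset.add_sum_erase _ (fun j => f (x j)) (Finset.mem_univ i)]
  have : ∑ j ∈ Finset.univ.erase i, f (Function.update x i k j)
      = ∑ j ∈ Finset.univ.erase i, f (x j) := by
    refine Finset.sum_congr rfl fun j hj => ?_
    rw [Function.update_of_ne (Finset.ne_of_mem_erase hj)]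
  rw [this]; simp; ring

lemma step {q : ℝ} (hq : 1 ≤ q) {d N : ℕ} (hN : 0 < N) (τ : ℝ) :
    ((BB q d N τ).card : ℝ) * (d - τ) ≤ (τ + 1) * ((BB q d N (τ + 1)).card : ℝ) := by
  have h1 : ((BB q d N τ).card : ℝ) * (d - τ) ≤
      ∑ x ∈ BB q d N τ, ∑ i, (if x i = 0 then (1 : ℝ) else 0) := by
    rw [← nsmul_eq_mul]
    refine Finset.card_nsmul_le_sum _ _ _ fun x hx => ?_
    have hx2 := (mem_BB.1 hx).2
    have h3 : ∑ i, (if x i = 0 then (0 : ℝ) else 1) ≤ τ :=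
      le_trans (Finset.sum_le_sum fun i _ => ind_le_rpow hq (x i)) hx2
    have h4 : ∑ i, (if x i = 0 then (1 : ℝ) else 0) + ∑ i, (if x i = 0 then (0 : ℝ) else 1) = d := by
      rw [← Finset.sum_add_distrib]
      rw [Finset.sum_congr rfl (g := fun _ => (1 : ℝ))]
      · simp
      · intro i _; split_ifs <;> simp
    linarith
  have h2 : ∑ y ∈ BB q d N (τ + 1), ∑ i, (if y i = 1 then (1 : ℝ) else 0) ≤
      (τ + 1) * ((BB q d N (τ + 1)).card : ℝ) := by
    rw [mul_comm, ← nsmul_eq_mul]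
    refine Finset.sum_le_card_nsmul _ _ _ fun x hx => ?_
    refine le_trans (Finset.sum_le_sum fun i _ => ?_) (mem_BB.1 hx).2
    split_ifs with h
    · simp [h]
    · positivity
  refine h1.trans (le_trans ?_ h2)
  rw [Finset.sum_comm, Finset.sum_comm (s := BB q d N (τ + 1))]
  refine Finset.sum_le_sum fun i _ => ?_
  rw [Finset.sum_boole, Finset.sum_boole]
  norm_cast
  refine Finset.card_le_card_of_injOn (fun x => Function.update x i 1) ?_ ?_
  · intro x hx
    simp only [Finset.coe_filter, Set.mem_ofPred_eq] at hx ⊢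
    obtain ⟨hx, hxi⟩ := hx
    rw [mem_BB] at hx ⊢
    refine ⟨⟨fun j => ?_, ?_⟩, by simp⟩
    · rcases eq_or_ne j i with rfl | hj
      · simp; omega
      · rw [Function.update_of_ne hj]; exact hx.1 j
    · rw [sum_update (fun k => |(k : ℝ)| ^ q)]
      have : (0 : ℝ) ≤ |((x i : ℤ) : ℝ)| ^ q := by positivity
      simp only [Int.cast_one, abs_one, Real.one_rpow]
      linarith [hx.2]
  · intro x hx y hy hxy
    simp only [Finset.coe_filter, Set.mem_ofPred_eq] at hx hy
    funext j
    rcases eq_or_ne j i with rfl | hj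
    · rw [hx.2, hy.2]
    · have := congrFun hxy j
      simpa [Function.update_of_ne hj] using this

lemma iter {q : ℝ} (hq : 1 ≤ q) {d N : ℕ} (hd : 0 < d) (hN : 0 < N) {M : ℝ} (hM : 2 * M ≤ d)
    (hM0 : 0 ≤ M) (n : ℕ) (τ : ℝ) (hτ : τ ≤ M) :
    ((BB q d N (τ - n)).card : ℝ) ≤ (2 * M / d) ^ n * ((BB q d N τ).card : ℝ) := by
  have hd' : (0 : ℝ) < d := by exact_mod_cast hd
  induction n with
  | zero => simp
  | succ n ih =>
    rcases lt_or_ge (τ - (n + 1)) 0 with h | h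
    · have : BB q d N (τ - ((n + 1 : ℕ) : ℝ)) = ∅ := by
        rw [Finset.eq_empty_iff_forall_notMem]
        intro x hx
        have h1 := (mem_BB.1 hx).2
        have : 0 ≤ ∑ i, |(x i : ℝ)| ^ q := Finset.sum_nonneg fun i _ => by positivity
        push_cast at h1
        linarith
      rw [this]; simp; positivity
    · have hs := step hq (d := d) hN (τ - (n + 1))
      have e1 : τ - ((n : ℝ) + 1) + 1 = τ - n := by ring
      rw [e1] at hs
      have hn : (0 : ℝ) ≤ n := by positivity
      have hc : (0 : ℝ) ≤ ((BB q d N (τ - (n + 1))).card : ℝ) := by positivity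
      have hc2 : (0 : ℝ) ≤ ((BB q d N (τ - n)).card : ℝ) := by positivity
      have h5 : ((BB q d N (τ - (n + 1))).card : ℝ) * (d / 2) ≤ M * ((BB q d N (τ - n)).card : ℝ) := by
        calc _ ≤ ((BB q d N (τ - (n + 1))).card : ℝ) * (d - (τ - (n + 1))) := by
              gcongr; linarith
          _ ≤ _ := hs
          _ ≤ _ := by gcongr; linarith
      have h6 : ((BB q d N (τ - (n + 1))).card : ℝ) ≤ 2 * M / d * ((BB q d N (τ - n)).card : ℝ) := by
        rw [div_mul_eq_mul_div, le_div_iff₀ hd']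
        linarith
      push_cast
      refine h6.trans ?_
      rw [pow_succ, mul_comm (_ ^ n), mul_assoc]
      gcongr

lemma main {q : ℝ} (hq : 1 ≤ q) {d N : ℕ} (hd : 0 < d) (hN : 0 < N) {M : ℝ} (hM : 2 * M ≤ d)
    (hM0 : 0 ≤ M) (h : ℤ → ℝ) (hh : ∀ k, 0 ≤ h k) (s : Finset (Fin d)) :
    ∀ τ ≤ M, ∑ x ∈ BB q d N τ, ∏ i ∈ s, (1 + h (x i)) ≤
      (1 + ∑ k ∈ Finset.Icc (-(N : ℤ)) N, h k * (2 * M / d) ^ k.natAbs) ^ s.card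
        * ((BB q d N τ).card : ℝ) := by
  set W := ∑ k ∈ Finset.Icc (-(N : ℤ)) N, h k * (2 * M / d) ^ k.natAbs with hW
  have hW0 : 0 ≤ W := Finset.sum_nonneg fun k _ => mul_nonneg (hh k) (by positivity)
  induction s using Finset.induction_on with
  | empty => intro τ _; simp
  | insert i s his ih =>
    intro τ hτ
    set F : (Fin d → ℤ) → ℝ := fun x => ∏ j ∈ s, (1 + h (x j)) with hF
    have hF0 : ∀ x, 0 ≤ F x := fun x => Finset.prod_nonneg fun j _ => by linarith [hh (x j)]
    have hFu : ∀ x k, F (Function.update x i k) = F x := by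
      intro x k
      refine Finset.prod_congr rfl fun j hj => ?_
      rw [Function.update_of_ne (by rintro rfl; exact his hj)]
    have e1 : ∑ x ∈ BB q d N τ, ∏ j ∈ insert i s, (1 + h (x j))
        = ∑ x ∈ BB q d N τ, F x + ∑ x ∈ BB q d N τ, h (x i) * F x := by
      rw [← Finset.sum_add_distrib]
      refine Finset.sum_congr rfl fun x _ => ?_
      rw [Finset.prod_insert his]; ring
    have e2 : ∑ x ∈ BB q d N τ, h (x i) * F x
        = ∑ k ∈ Finset.Icc (-(N : ℤ)) N, ∑ x ∈ (BB q d N τ).filter (fun x => x i = k), h (x i) * F x := by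
      rw [Finset.sum_fiberwise_of_maps_to]
      intro x hx
      rw [Finset.mem_Icc]
      exact (mem_BB.1 hx).1 i
    have e3 : ∀ k ∈ Finset.Icc (-(N : ℤ)) N,
        ∑ x ∈ (BB q d N τ).filter (fun x => x i = k), h (x i) * F x ≤
        (h k * (2 * M / d) ^ k.natAbs) * ((1 + W) ^ s.card * ((BB q d N τ).card : ℝ)) := by
      intro k hk
      have f1 : ∑ x ∈ (BB q d N τ).filter (fun x => x i = k), h (x i) * F x
          = h k * ∑ x ∈ (BB q d N τ).filter (fun x => x i = k), F x := by
        rw [Finset.mul_sum]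
        refine Finset.sum_congr rfl fun x hx => ?_
        rw [(Finset.mem_filter.1 hx).2]
      have f2 : ∑ x ∈ (BB q d N τ).filter (fun x => x i = k), F x
          ≤ ∑ x ∈ BB q d N (τ - k.natAbs), F x := by
        have inj : Set.InjOn (fun x : Fin d → ℤ => Function.update x i 0)
            ((BB q d N τ).filter (fun x => x i = k) : Finset _) := by
          intro x hx y hy hxy
          simp only [Finset.coe_filter, Set.mem_ofPred_eq] at hx hy
          funext j
          rcases eq_or_ne j i with rfl | hj
          · rw [hx.2, hy.2]
          · have := congrFun hxy j
            simpa [Function.update_of_ne hj] using this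
        have : ∑ x ∈ (BB q d N τ).filter (fun x => x i = k), F x
            = ∑ x ∈ ((BB q d N τ).filter (fun x => x i = k)).image
                (fun x : Fin d → ℤ => Function.update x i 0), F x := by
          rw [Finset.sum_image inj]
          exact Finset.sum_congr rfl fun x _ => (hFu x 0).symm
        rw [this]
        refine Finset.sum_le_sum_of_subset_of_nonneg ?_ fun x _ _ => hF0 x
        intro y hy
        obtain ⟨x, hx, rfl⟩ := Finset.mem_image.1 hy
        obtain ⟨hx, hxi⟩ := Finset.mem_filter.1 hx
        rw [mem_BB] at hx ⊢
        refine ⟨fun j => ?_, ?_⟩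
        · rcases eq_or_ne j i with rfl | hj
          · simp
          · simp only [Function.update_of_ne hj]; exact hx.1 j
        · rw [sum_update (fun k => |(k : ℝ)| ^ q)]
          have a1 := abs_le_rpow hq (x i)
          have a2 : ((k.natAbs : ℕ) : ℝ) = |((x i : ℤ) : ℝ)| := by
            rw [hxi, Nat.cast_natAbs, Int.cast_abs]
          rw [a2]
          simp only [Int.cast_zero, abs_zero]
          rw [Real.zero_rpow (by linarith)]
          linarith [hx.2]
      have f3 := ih (τ - k.natAbs) (by have : (0 : ℝ) ≤ k.natAbs := by positivity
                                       linarith)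
      have f4 := iter hq hd hN hM hM0 k.natAbs τ hτ
      rw [f1]
      calc _ ≤ h k * ((1 + W) ^ s.card * ((2 * M / d) ^ k.natAbs * ((BB q d N τ).card : ℝ))) := by
            refine mul_le_mul_of_nonneg_left ?_ (hh k)
            refine (f2.trans f3).trans ?_
            gcongr
        _ = _ := by ring
    rw [e1, e2, Finset.card_insert_of_notMem his]
    have e4 := Finset.sum_le_sum e3
    rw [← Finset.sum_mul, ← hW] at e4
    have e5 := ih τ hτ
    calc _ ≤ (1 + W) ^ s.card * ((BB q d N τ).card : ℝ)
          + W * ((1 + W) ^ s.card * ((BB q d N τ).card : ℝ)) := add_le_add e5 e4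
      _ = _ := by ring

lemma geo {r : ℝ} (h0 : 0 ≤ r) (h1 : r ≤ 1 / 2) (N : ℕ) (hN : 1 ≤ N) :
    ∑ k ∈ Finset.Icc (-(N : ℤ)) N, (if 2 ≤ |k| then r ^ k.natAbs else 0) ≤
      4 * r ^ 2 - 4 * r ^ (N + 1) := by
  induction N, hN using Nat.le_induction with
  | base =>
    rw [Finset.sum_eq_zero]
    · simp
    · intro k hk
      rw [Finset.mem_Icc] at hk
      rw [if_neg]
      have : |k| ≤ 1 := abs_le.2 (by simpa using hk)
      omega
  | succ n hn ih =>
    have e : Finset.Icc (-((n + 1 : ℕ) : ℤ)) ((n + 1 : ℕ) : ℤ) =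
        insert ((n : ℤ) + 1) (insert (-((n : ℤ) + 1)) (Finset.Icc (-(n : ℤ)) n)) := by
      ext k; simp only [Finset.mem_Icc, Finset.mem_insert]; push_cast; omega
    rw [e, Finset.sum_insert, Finset.sum_insert]
    · have a1 : |(n : ℤ) + 1| = n + 1 := abs_of_nonneg (by positivity)
      have a2 : ((n : ℤ) + 1).natAbs = n + 1 := by omega
      rw [Int.natAbs_neg, abs_neg, a1, a2, if_pos (by omega)]
      have : r ^ (n + 1 + 1) ≤ r ^ (n + 1) * (1 / 2) := by
        rw [pow_succ]; gcongr
      linarith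
    · simp
    · simp only [Finset.mem_Icc, Finset.mem_insert]; omega

lemma geo' {r : ℝ} (h0 : 0 ≤ r) (h1 : r ≤ 1 / 2) (N : ℕ) (hN : 1 ≤ N) :
    ∑ k ∈ Finset.Icc (-(N : ℤ)) N, (if 2 ≤ |k| then r ^ k.natAbs else 0) ≤ 4 * r ^ 2 := by
  have := geo h0 h1 N hN
  have h2 : 0 ≤ r ^ (N + 1) := by positivity
  linarith

/-- Markov inequality together with the product bound. -/
lemma markov {q : ℝ} (hq : 1 ≤ q) {d N : ℕ} (hd : 0 < d) (hN : 0 < N) {M : ℝ} (hM : 2 * M ≤ d)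
    (hM0 : 0 ≤ M) (h : ℤ → ℝ) (hh : ∀ k, 0 ≤ h k) (A : Finset (Fin d → ℤ)) (hA : A ⊆ BB q d N M)
    (L : ℝ) (hL : ∀ x ∈ A, L ≤ ∏ i, (1 + h (x i))) (V : ℝ)
    (hV : d * ∑ k ∈ Finset.Icc (-(N : ℤ)) N, h k * (2 * M / d) ^ k.natAbs ≤ V) :
    (A.card : ℝ) * L ≤ Real.exp V * ((BB q d N M).card : ℝ) := by
  have h1 := main hq hd hN hM hM0 h hh Finset.univ M le_rfl
  set W := ∑ k ∈ Finset.Icc (-(N : ℤ)) N, h k * (2 * M / d) ^ k.natAbs with hW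
  have hW0 : 0 ≤ W := Finset.sum_nonneg fun k _ => mul_nonneg (hh k) (by positivity)
  have h2 : (A.card : ℝ) * L ≤ ∑ x ∈ A, ∏ i, (1 + h (x i)) := by
    rw [← nsmul_eq_mul]
    exact Finset.card_nsmul_le_sum _ _ _ hL
  have h3 : ∑ x ∈ A, ∏ i, (1 + h (x i)) ≤ ∑ x ∈ BB q d N M, ∏ i, (1 + h (x i)) :=
    Finset.sum_le_sum_of_subset_of_nonneg hA fun x _ _ =>
      Finset.prod_nonneg fun j _ => by linarith [hh (x j)]
  refine (h2.trans h3).trans (h1.trans ?_)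
  gcongr
  rw [Finset.card_univ, Fintype.card_fin]
  calc (1 + W) ^ d ≤ (Real.exp W) ^ d := by
        gcongr; linarith [Real.add_one_le_exp W]
    _ = Real.exp (d * W) := by rw [← Real.exp_nat_mul]
    _ ≤ _ := Real.exp_le_exp.2 hV

/-- Case of tiny `ε`. -/
lemma caseA {q : ℝ} (hq : 1 ≤ q) {d N : ℕ} (hd : 0 < d) (hN : 0 < N) {M ε : ℝ}
    (hM1 : 1 ≤ M) (hε : ε * d = M) (hε1 : ε ≤ 1 / 4) (A : Finset (Fin d → ℤ))
    (hA : A ⊆ BB q d N M) (hA2 : ∀ x ∈ A, ∃ i, 2 ≤ |x i|) :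
    (A.card : ℝ) ≤ 48 * (M * ε) * ((BB q d N M).card : ℝ) := by
  have hd' : (0 : ℝ) < d := by exact_mod_cast hd
  have hε0 : 0 < ε := by
    by_contra hc
    have : ε * d ≤ 0 := mul_nonpos_of_nonpos_of_nonneg (not_lt.1 hc) hd'.le
    linarith
  have hr : 2 * M / d = 2 * ε := by rw [← hε]; field_simp
  set L : ℝ := 1 / (16 * (M * ε)) with hL
  have hL0 : 0 < L := by positivity
  have key := markov hq hd hN (M := M) (by rw [← hε]; nlinarith) (by linarith)
    (fun k => if 2 ≤ |k| then L else 0) (fun k => by split_ifs <;> positivity) A hA L ?_ 1 ?_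
  · have he : Real.exp 1 ≤ 3 := by linarith [Real.exp_one_lt_d9]
    have hc : (0 : ℝ) ≤ ((BB q d N M).card : ℝ) := by positivity
    have k2 : (A.card : ℝ) * L ≤ 3 * ((BB q d N M).card : ℝ) := key.trans (by gcongr)
    rw [hL, mul_one_div, div_le_iff₀ (by positivity)] at k2
    linarith
  · intro x hx
    obtain ⟨i, hi⟩ := hA2 x hx
    have : (1 + if 2 ≤ |x i| then L else 0) ≤ ∏ i, (1 + if 2 ≤ |x i| then L else 0) := by
      rw [← Finset.mul_prod_erase _ _ (Finset.mem_univ i)]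
      refine le_mul_of_one_le_right (by split_ifs <;> linarith) ?_
      refine Finset.prod_induction _ (fun t : ℝ => 1 ≤ t)
        (fun a b ha hb => one_le_mul_of_one_le_of_one_le ha hb) le_rfl fun j _ => ?_
      split_ifs <;> linarith
    rw [if_pos hi] at this
    linarith
  · have g := geo' (r := 2 * ε) (by positivity) (by linarith) N hN
    have : ∑ k ∈ Finset.Icc (-(N : ℤ)) N, (if 2 ≤ |k| then L else 0) * (2 * M / d) ^ k.natAbs
        = L * ∑ k ∈ Finset.Icc (-(N : ℤ)) N, (if 2 ≤ |k| then (2 * ε) ^ k.natAbs else 0) := by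
      rw [Finset.mul_sum, hr]
      refine Finset.sum_congr rfl fun k _ => ?_
      split_ifs <;> simp
    rw [this]
    calc _ ≤ d * (L * (4 * (2 * ε) ^ 2)) := by gcongr
      _ = L * (16 * ((ε * d) * ε)) := by ring
      _ = 1 := by rw [hε, hL]; field_simp

/-- Main case. -/
lemma caseB {q : ℝ} (hq : 1 ≤ q) {d N : ℕ} (hd : 0 < d) (hN : 0 < N) {M ε K : ℝ}
    (hM1 : 1 ≤ M) (hε : ε * d = M) (hε1 : ε ≤ Real.exp (-12)) (hK : 0 < K)
    (hK4 : 768 * Real.exp 4 * ε * M ≤ K ^ 4) (A : Finset (Fin d → ℤ))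
    (hA : A ⊆ BB q d N M)
    (hA2 : ∀ x ∈ A, K ^ 4 < ∑ i ∈ Finset.univ.filter (fun i => 2 ≤ |x i|), ((x i : ℝ)) ^ (4 : ℕ)) :
    (A.card : ℝ) ≤ Real.exp (-(K / 2)) * ((BB q d N M).card : ℝ) := by
  have hd' : (0 : ℝ) < d := by exact_mod_cast hd
  have hε0 : 0 < ε := by
    by_contra hc
    have : ε * d ≤ 0 := mul_nonpos_of_nonpos_of_nonneg (not_lt.1 hc) hd'.le
    linarith
  have hr : 2 * M / d = 2 * ε := by rw [← hε]; field_simp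
  have h10 : Real.exp (-10) ≤ 1 / 4 := by
    rw [Real.exp_neg, inv_le_comm₀ (Real.exp_pos _) (by norm_num)]
    have := Real.add_one_le_exp (10 : ℝ)
    norm_num; linarith
  have hexp : Real.exp 2 * ε ≤ 1 / 4 := by
    refine le_trans ?_ h10
    calc Real.exp 2 * ε ≤ Real.exp 2 * Real.exp (-12) := by gcongr
      _ = _ := by rw [← Real.exp_add]; norm_num
  have hε4 : ε ≤ 1 / 4 := by
    have : 1 ≤ Real.exp 2 := Real.one_le_exp (by norm_num)
    nlinarith
  set g : ℤ → ℝ := fun k => min |(k : ℝ)| ((k : ℝ) ^ 4 / K ^ 3) with hg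
  have hg0 : ∀ k, 0 ≤ g k := fun k => le_min (abs_nonneg _) (by positivity)
  set h : ℤ → ℝ := fun k => if 2 ≤ |k| then Real.exp (g k) - 1 else 0 with hh
  have hh0 : ∀ k, 0 ≤ h k := by
    intro k
    simp only [hh]
    split_ifs
    · linarith [Real.one_le_exp (hg0 k)]
    · exact le_rfl
  have key := markov hq hd hN (M := M) (by rw [← hε]; nlinarith) (by linarith)
    h hh0 A hA (Real.exp K) ?_ (K / 2) ?_
  · have : (A.card : ℝ) = A.card * Real.exp K * Real.exp (-K) := by
      rw [mul_assoc, ← Real.exp_add]; simp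
    rw [this]
    calc _ ≤ Real.exp (K / 2) * ((BB q d N M).card : ℝ) * Real.exp (-K) := by gcongr
      _ = Real.exp (K / 2) * Real.exp (-K) * ((BB q d N M).card : ℝ) := by ring
      _ = _ := by rw [← Real.exp_add]; congr 2; ring
  · intro x hx
    have e1 : ∏ i, (1 + h (x i)) = Real.exp (∑ i ∈ Finset.univ.filter (fun i => 2 ≤ |x i|), g (x i)) := by
      rw [Real.exp_sum, Finset.prod_filter]
      refine Finset.prod_congr rfl fun i _ => ?_
      simp only [hh]
      split_ifs <;> ring
    rw [e1, Real.exp_le_exp]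
    by_cases hb : ∃ i, 2 ≤ |x i| ∧ K ≤ |((x i : ℤ) : ℝ)|
    · obtain ⟨i, hi, hi2⟩ := hb
      refine le_trans ?_ (Finset.single_le_sum (f := fun i => g (x i)) (fun i _ => hg0 (x i))
        (Finset.mem_filter.2 ⟨Finset.mem_univ i, hi⟩))
      refine le_min hi2 ?_
      rw [le_div_iff₀ (by positivity)]
      calc K * K ^ 3 = K ^ 4 := by ring
        _ ≤ |((x i : ℤ) : ℝ)| ^ 4 := by gcongr
        _ = _ := by rw [Even.pow_abs (by decide)]
    · push Not at hb
      have e2 : ∑ i ∈ Finset.univ.filter (fun i => 2 ≤ |x i|), g (x i)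
          = (∑ i ∈ Finset.univ.filter (fun i => 2 ≤ |x i|), ((x i : ℝ)) ^ (4 : ℕ)) / K ^ 3 := by
        rw [Finset.sum_div]
        refine Finset.sum_congr rfl fun i hi => ?_
        have hlt := hb i (Finset.mem_filter.1 hi).2
        refine min_eq_right ?_
        rw [div_le_iff₀ (by positivity)]
        calc ((x i : ℤ) : ℝ) ^ 4 = |((x i : ℤ) : ℝ)| ^ 4 := by rw [Even.pow_abs (by decide)]
          _ = |((x i : ℤ) : ℝ)| * |((x i : ℤ) : ℝ)| ^ 3 := by ring
          _ ≤ _ := by gcongr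
      rw [e2, le_div_iff₀ (by positivity)]
      have := hA2 x hx
      calc K * K ^ 3 = K ^ 4 := by ring
        _ ≤ _ := this.le
  · have gg := geo' (r := Real.exp 2 * (2 * ε)) (by positivity) (by linarith) N hN
    have : ∑ k ∈ Finset.Icc (-(N : ℤ)) N, h k * (2 * M / d) ^ k.natAbs
        ≤ (24 / K ^ 3) * ∑ k ∈ Finset.Icc (-(N : ℤ)) N,
          (if 2 ≤ |k| then (Real.exp 2 * (2 * ε)) ^ k.natAbs else 0) := by
      rw [Finset.mul_sum, hr]
      refine Finset.sum_le_sum fun k _ => ?_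
      simp only [hh]
      split_ifs
      · have b1 : Real.exp (g k) - 1 ≤ g k * Real.exp (g k) := by
          have := Real.add_one_le_exp (-(g k))
          have h2 : Real.exp (-(g k)) * Real.exp (g k) = 1 := by rw [← Real.exp_add]; simp
          nlinarith [Real.exp_pos (g k)]
        have b2 : (k : ℝ) ^ 4 ≤ 24 * Real.exp |(k : ℝ)| := by
          have := Real.pow_div_factorial_le_exp |(k : ℝ)| (abs_nonneg _) 4
          rw [Even.pow_abs (by decide)] at this
          norm_num [Nat.factorial] at this
          linarith
        have b3 : Real.exp (g k) ≤ Real.exp |(k : ℝ)| := Real.exp_le_exp.2 (min_le_left _ _)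
        have b4 : g k ≤ (k : ℝ) ^ 4 / K ^ 3 := min_le_right _ _
        have b5 : Real.exp (g k) - 1 ≤ 24 / K ^ 3 * (Real.exp 2) ^ k.natAbs := by
          calc _ ≤ g k * Real.exp (g k) := b1
            _ ≤ (24 * Real.exp |(k : ℝ)|) / K ^ 3 * Real.exp |(k : ℝ)| := by
                have : g k ≤ (24 * Real.exp |(k : ℝ)|) / K ^ 3 := b4.trans (by gcongr)
                gcongr
            _ = 24 / K ^ 3 * (Real.exp |(k : ℝ)| * Real.exp |(k : ℝ)|) := by ring
            _ = _ := by
                rw [← Real.exp_add, ← Real.exp_nat_mul, Nat.cast_natAbs, Int.cast_abs]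
                congr 2; ring
        rw [mul_pow (Real.exp 2), ← mul_assoc]
        exact mul_le_mul_of_nonneg_right b5 (by positivity)
      · simp
    calc _ ≤ d * ((24 / K ^ 3) * (4 * (Real.exp 2 * (2 * ε)) ^ 2)) := by
          have h24 : 0 ≤ 24 / K ^ 3 := by positivity
          exact mul_le_mul_of_nonneg_left (this.trans (mul_le_mul_of_nonneg_left gg h24)) hd'.le
      _ = (384 * (Real.exp 2) ^ 2 * ε * (ε * d)) / K ^ 3 := by ring
      _ = (384 * Real.exp 4 * ε * M) / K ^ 3 := by
          rw [hε, ← Real.exp_nat_mul]; norm_num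
      _ ≤ K / 2 := by
          rw [div_le_iff₀ (by positivity)]
          nlinarith

end LB

open Classical in
theorem stmt8 :
    ∃ C : ℝ, 0 < C ∧ ∀ (q : ℝ), 1 ≤ q → ∀ d N : ℕ, 0 < d → 0 < N →
      (N : ℝ) / (d : ℝ) ^ (1 / q) ≤ Real.exp (-12 / q) →
      (((latticeBall q d N).filter (fun x =>
          ((N : ℝ) / (d : ℝ) ^ (1 / q)) ^ (q / 22) * (N : ℝ) ^ q
            < ∑ i ∈ Finset.univ.filter (fun i => 2 ≤ |x i|),
                ((x i : ℝ)) ^ (4 : ℕ))).card : ℝ)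
        ≤ C * (N : ℝ) ^ (-q) * ((latticeBall q d N).card : ℝ) := by
  refine ⟨3840, by norm_num, ?_⟩
  intro q hq d N hd hN hκ
  have hd' : (0 : ℝ) < d := by exact_mod_cast hd
  have hN' : (1 : ℝ) ≤ N := by exact_mod_cast hN
  have hq0 : 0 < q := by linarith
  have hBB : latticeBall q d N = LB.BB q d N ((N : ℝ) ^ q) := by
    ext x
    simp only [latticeBall, LB.BB, Nat.ceil_natCast, Finset.mem_filter]
  rw [hBB, Real.rpow_neg (by positivity)]
  set M : ℝ := (N : ℝ) ^ q with hM
  have hM1 : 1 ≤ M := Real.one_le_rpow hN' hq0.le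
  set κ : ℝ := (N : ℝ) / (d : ℝ) ^ (1 / q) with hκdef
  have hκ0 : 0 < κ := by positivity
  set ε : ℝ := κ ^ q with hεdef
  have hε0 : 0 < ε := by positivity
  have hε : ε * d = M := by
    rw [hεdef, hκdef, Real.div_rpow (by positivity) (by positivity), ← Real.rpow_mul hd'.le,
      one_div_mul_cancel hq0.ne', Real.rpow_one]
    exact div_mul_cancel₀ _ hd'.ne'
  have hε1 : ε ≤ Real.exp (-12) := by
    calc ε ≤ (Real.exp (-12 / q)) ^ q := Real.rpow_le_rpow hκ0.le hκ hq0.le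
      _ = _ := by rw [← Real.exp_mul]; congr 1; field_simp
  have hlm : κ ^ (q / 22) = ε ^ ((1 : ℝ) / 22) := by
    rw [hεdef, ← Real.rpow_mul hκ0.le]; congr 1; ring
  rw [hlm]
  set lam : ℝ := ε ^ ((1 : ℝ) / 22) with hlam
  have hlam0 : 0 < lam := by positivity
  set A := (LB.BB q d N M).filter (fun x => lam * M
            < ∑ i ∈ Finset.univ.filter (fun i => 2 ≤ |x i|), ((x i : ℝ)) ^ (4 : ℕ)) with hA
  have hAs : A ⊆ LB.BB q d N M := Finset.filter_subset _ _
  have hc : (0 : ℝ) ≤ ((LB.BB q d N M).card : ℝ) := by positivity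
  have hM0 : 0 < M := by linarith
  rcases lt_or_ge (ε * M ^ 2) 1 with hcase | hcase
  · have hε4 : ε ≤ 1 / 4 := by
      refine hε1.trans ?_
      rw [Real.exp_neg, inv_le_comm₀ (Real.exp_pos _) (by norm_num)]
      have := Real.add_one_le_exp (12 : ℝ)
      norm_num; linarith
    have := LB.caseA hq hd hN hM1 hε hε4 A hAs ?_
    · refine this.trans ?_
      refine mul_le_mul_of_nonneg_right ?_ hc
      rw [← div_eq_mul_inv, le_div_iff₀ hM0]
      nlinarith
    · intro x hx
      by_contra hno
      push Not at hno
      have h2 := (Finset.mem_filter.1 hx).2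
      rw [Finset.filter_false_of_mem (fun i _ => not_le.2 (hno i)), Finset.sum_empty] at h2
      have : 0 < lam * M := by positivity
      linarith
  · set K : ℝ := (lam * M) ^ ((1 : ℝ) / 4) with hK
    have hK0 : 0 < K := by positivity
    have hK4 : K ^ 4 = lam * M := by
      rw [hK, ← Real.rpow_natCast, ← Real.rpow_mul (by positivity)]
      norm_num
    have := LB.caseB hq hd hN hM1 hε hε1 hK0 ?_ A hAs ?_
    · refine this.trans ?_
      gcongr
      have hlam22 : lam ^ 22 = ε := by
        rw [hlam, ← Real.rpow_natCast, ← Real.rpow_mul (by positivity)]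
        norm_num
      have hK5 : M ≤ K ^ 5 := by
        by_contra hlt
        push Not at hlt
        have p1 : (K ^ 5) ^ 88 < M ^ 88 := by gcongr
        have p2 : (K ^ 5) ^ 88 = (ε * M ^ 2) ^ 5 * M ^ 100 := by
          calc (K ^ 5) ^ 88 = (K ^ 4) ^ 110 := by ring
            _ = (lam ^ 22) ^ 5 * M ^ 110 := by rw [hK4]; ring
            _ = _ := by rw [hlam22]; ring
        have p3 : M ^ 88 ≤ M ^ 100 := pow_le_pow_right₀ hM1 (by norm_num)
        have p4 : 1 ≤ (ε * M ^ 2) ^ 5 := one_le_pow₀ hcase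
        have p5 : 0 < M ^ 100 := by positivity
        nlinarith
      have hf := Real.pow_div_factorial_le_exp (K / 2) (by positivity) 5
      have hf2 : K ^ 5 / 3840 ≤ Real.exp (K / 2) := by
        refine le_trans (le_of_eq ?_) hf
        norm_num [Nat.factorial]; ring
      rw [Real.exp_neg, ← div_eq_mul_inv, le_div_iff₀ hM0, inv_mul_le_iff₀ (Real.exp_pos _)]
      linarith
    · rw [hK4]
      have h7 : (768 : ℝ) ≤ Real.exp 7 := by
        have : Real.exp 7 = (Real.exp 1) ^ 7 := by rw [← Real.exp_nat_mul]; norm_num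
        rw [this]
        calc (768 : ℝ) ≤ (2.7 : ℝ) ^ 7 := by norm_num
          _ ≤ _ := by
            have := Real.exp_one_gt_d9
            gcongr
            linarith
      have h1 : ε = lam * ε ^ ((21 : ℝ) / 22) := by
        rw [hlam, ← Real.rpow_add hε0]; norm_num
      have h2 : ε ^ ((21 : ℝ) / 22) ≤ Real.exp (-11) := by
        calc _ ≤ (Real.exp (-12)) ^ ((21 : ℝ) / 22) := by gcongr
          _ = Real.exp (-12 * (21 / 22)) := by rw [← Real.exp_mul]
          _ ≤ _ := Real.exp_le_exp.2 (by norm_num)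
      have h3 : 768 * Real.exp 4 * ε ^ ((21 : ℝ) / 22) ≤ 1 := by
        calc _ ≤ Real.exp 7 * Real.exp 4 * Real.exp (-11) := by gcongr
          _ = 1 := by rw [← Real.exp_add, ← Real.exp_add]; norm_num
      calc 768 * Real.exp 4 * ε * M
          = (768 * Real.exp 4 * ε ^ ((21 : ℝ) / 22)) * (lam * M) := by
            conv_lhs => rw [h1]
            ring
        _ ≤ 1 * (lam * M) := by gcongr
        _ = _ := one_mul _
    · intro x hx
      rw [hK4]
      exact (Finset.mem_filter.1 hx).2
end

section
/- Let M ∈ ℕ and let (u_j : j ∈ [d]) be a sequence of real numbers with 0 ≤ u_j ≤ M·(1−δ₀)/2 for some δ₀ ∈ (0,1). Suppose I ⊆ [d] satisfies δ₁·d ≤ |I| ≤ d for some δ₁ ∈ (0,1]. Then for every J = (d₀, d] ∩ ℤ with 0 ≤ d₀ ≤ d one has (1/d!)·Σ_{τ ∈ Sym(d)} exp(−Σ_{j ∈ τ(I) ∩ J} u_j) ≤ 3·exp(−(δ₀δ₁/(20M))·Σ_{j ∈ J} u_j). -/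
open Classical in
/-- Bound on the number of permutations whose image of `I` avoids `A`. -/
lemma avoid_bound (d : ℕ) (hd : 0 < d) (I : Finset (Fin d)) (A : Finset (Fin d)) :
    ∑ τ : Equiv.Perm (Fin d), ∏ j ∈ A, (if j ∈ I.image τ then (0:ℝ) else 1)
      ≤ (d.factorial : ℝ) * (1 - I.card / d) ^ A.card := by
  have hd' : (0:ℝ) < d := by exact_mod_cast hd
  have hk : (I.card : ℝ) ≤ d := by
    have := Finset.card_le_univ I
    simp only [Fintype.card_fin] at this
    exact_mod_cast this
  have hp : 0 ≤ 1 - (I.card : ℝ) / d := by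
    have : (I.card : ℝ) / d ≤ 1 := by rw [div_le_one hd']; exact hk
    linarith
  induction A using Finset.induction_on with
  | empty => simp [Fintype.card_perm]
  | insert a A ha ih =>
    rw [Finset.card_insert_of_notMem ha, pow_succ, ← mul_assoc]
    set c : Equiv.Perm (Fin d) → Fin d → ℝ := fun τ j => if j ∈ I.image τ then (0:ℝ) else 1 with hc
    have hc0 : ∀ τ j, 0 ≤ c τ j := by
      intro τ j; simp only [hc]; split_ifs <;> norm_num
    change ∑ τ, ∏ j ∈ A, c τ j ≤ _ at ih
    change ∑ τ, ∏ j ∈ insert a A, c τ j ≤ _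
    set W := ∑ τ, ∏ j ∈ A, c τ j with hW
    set W' := ∑ τ, ∏ j ∈ insert a A, c τ j with hW'
    have hsym : ∀ j ∈ Aᶜ, ∑ τ, (∏ i ∈ A, c τ i) * c τ j = W' := by
      intro j hj
      rw [Finset.mem_compl] at hj
      rw [hW', ← Equiv.sum_comp (Equiv.mulLeft (Equiv.swap a j))]
      refine Finset.sum_congr rfl fun τ _ => ?_
      have key : ∀ i, c (Equiv.mulLeft (Equiv.swap a j) τ) i = c τ (Equiv.swap a j i) := by
        intro i
        simp only [hc]
        congr 1
        simp only [Finset.mem_image, Equiv.coe_mulLeft, Equiv.Perm.mul_apply, eq_iff_iff]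
        constructor
        · rintro ⟨x, hx, rfl⟩; exact ⟨x, hx, by simp⟩
        · rintro ⟨x, hx, h⟩; exact ⟨x, hx, by simp [h]⟩
      rw [Finset.prod_insert ha, mul_comm]
      simp only [key]
      congr 1
      · simp
      · refine Finset.prod_congr rfl fun i hi => ?_
        rw [Equiv.swap_apply_of_ne_of_ne]
        · rintro rfl; exact ha hi
        · rintro rfl; exact hj hi
    have hsum : ∑ j ∈ Aᶜ, ∑ τ, (∏ i ∈ A, c τ i) * c τ j = ((d:ℝ) - I.card - A.card) * W := by
      rw [Finset.sum_comm, hW, Finset.mul_sum]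
      refine Finset.sum_congr rfl fun τ _ => ?_
      rw [← Finset.mul_sum, mul_comm]
      by_cases h : ∃ i ∈ A, c τ i = 0
      · obtain ⟨i, hi, h0⟩ := h
        rw [Finset.prod_eq_zero hi h0]; simp
      · push Not at h
        congr 1
        have h1 : ∑ j ∈ A, c τ j = A.card := by
          rw [Finset.sum_congr rfl (g := fun _ => (1:ℝ))]
          · simp
          · intro i hi
            have := h i hi
            simp only [hc] at this ⊢
            by_cases hh : i ∈ I.image τ <;> simp_all
        have h2 : ∑ j, c τ j = (d:ℝ) - I.card := by
          have : ∀ j, c τ j = 1 - (if j ∈ I.image τ then (1:ℝ) else 0) := by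
            intro j; simp only [hc]; split_ifs <;> norm_num
          simp only [this, Finset.sum_sub_distrib]
          rw [Finset.sum_ite_mem]
          simp [Finset.card_image_of_injective I τ.injective]
        have h3 := Finset.sum_add_sum_compl A (c τ)
        linarith
    rw [Finset.sum_congr rfl hsym, Finset.sum_const, nsmul_eq_mul] at hsum
    have hcard : (Aᶜ.card : ℝ) = d - A.card := by
      have := Finset.card_add_card_compl A
      simp only [Fintype.card_fin] at this
      have h : (A.card : ℝ) + Aᶜ.card = d := by exact_mod_cast this
      linarith
    have hpos : (0:ℝ) < d - A.card := by
      rw [← hcard]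
      have : 0 < Aᶜ.card := Finset.card_pos.mpr ⟨a, by simpa using ha⟩
      exact_mod_cast this
    rw [hcard] at hsum
    have hW0 : 0 ≤ W := Finset.sum_nonneg fun τ _ => Finset.prod_nonneg fun j _ => hc0 τ j
    have hstep : W' ≤ W * (1 - I.card / d) := by
      rw [← mul_le_mul_iff_right₀ hpos, hsum]
      have : ((d:ℝ) - A.card) * (W * (1 - I.card / d)) - (d - I.card - A.card) * W
          = W * (A.card * I.card / d) := by
        field_simp; ring
      have h2 : 0 ≤ W * ((A.card:ℝ) * I.card / d) := by positivity
      linarith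
    exact hstep.trans (mul_le_mul_of_nonneg_right ih hp)

open Classical in
lemma neg_corr (d : ℕ) (hd : 0 < d) (I : Finset (Fin d)) (b : Fin d → ℝ)
    (hb : ∀ j, 0 ≤ b j ∧ b j ≤ 1) :
    ∑ τ : Equiv.Perm (Fin d), ∏ j ∈ I.image τ, b j
      ≤ (d.factorial : ℝ) * ∏ j, (b j + (1 - b j) * (1 - I.card / d)) := by
  have h1 : ∀ τ : Equiv.Perm (Fin d), ∏ j ∈ I.image τ, b j
      = ∑ R ∈ (Finset.univ : Finset (Fin d)).powerset, (∏ j ∈ R, b j) *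
        ((∏ j ∈ Finset.univ \ R, (1 - b j)) *
          ∏ j ∈ Finset.univ \ R, (if j ∈ I.image τ then (0:ℝ) else 1)) := by
    intro τ
    simp only [← Finset.prod_mul_distrib]
    rw [← Finset.prod_add, ← Finset.prod_subset (Finset.subset_univ (I.image τ))]
    · refine Finset.prod_congr rfl fun j hj => ?_
      rw [if_pos hj]; ring
    · intro j _ hj
      rw [if_neg hj]; ring
  simp only [h1]
  rw [Finset.sum_comm, Finset.prod_add, Finset.mul_sum]
  refine Finset.sum_le_sum fun R _ => ?_
  rw [← Finset.mul_sum, ← Finset.mul_sum, Finset.prod_mul_distrib, Finset.prod_const]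
  have := avoid_bound d hd I (Finset.univ \ R)
  have hA : 0 ≤ ∏ j ∈ R, b j := Finset.prod_nonneg fun j _ => (hb j).1
  have hB : 0 ≤ ∏ j ∈ Finset.univ \ R, (1 - b j) :=
    Finset.prod_nonneg fun j _ => by linarith [(hb j).2]
  calc _ ≤ (∏ j ∈ R, b j) * ((∏ j ∈ Finset.univ \ R, (1 - b j)) * _) :=
        mul_le_mul_of_nonneg_left (mul_le_mul_of_nonneg_left this hB) hA
    _ = _ := by ring

open Classical in
theorem stmt9 (d : ℕ) (hd : 0 < d) (M : ℕ) (hM : 0 < M)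
    (δ₀ : ℝ) (hδ₀ : 0 < δ₀) (hδ₀' : δ₀ < 1)
    (u : Fin d → ℝ) (hu : ∀ j, 0 ≤ u j ∧ u j ≤ M * (1 - δ₀) / 2)
    (δ₁ : ℝ) (hδ₁ : 0 < δ₁) (hδ₁' : δ₁ ≤ 1)
    (I : Finset (Fin d)) (hI : δ₁ * d ≤ I.card)
    (d₀ : ℕ) (hd₀ : d₀ ≤ d) :
    (1 / (d.factorial : ℝ)) * ∑ τ : Equiv.Perm (Fin d),
        Real.exp (-∑ j ∈ (I.image τ) ∩ (Finset.univ.filter (fun j : Fin d => d₀ ≤ (j : ℕ))), u j)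
      ≤ 3 * Real.exp (-(δ₀ * δ₁ / (20 * M)) *
          ∑ j ∈ Finset.univ.filter (fun j : Fin d => d₀ ≤ (j : ℕ)), u j) := by
  set J := Finset.univ.filter (fun j : Fin d => d₀ ≤ (j : ℕ)) with hJ
  have hd' : (0:ℝ) < d := by exact_mod_cast hd
  have hM' : (1:ℝ) ≤ M := by exact_mod_cast hM
  have hf : (0:ℝ) < d.factorial := by exact_mod_cast d.factorial_pos
  set v : Fin d → ℝ := fun j => if j ∈ J then u j else 0 with hv
  have hv0 : ∀ j, 0 ≤ v j ∧ v j ≤ M / 2 := by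
    intro j
    simp only [hv]
    split_ifs
    · refine ⟨(hu j).1, (hu j).2.trans ?_⟩
      nlinarith
    · constructor <;> linarith
  have hsumv : ∀ S : Finset (Fin d), ∑ j ∈ S ∩ J, u j = ∑ j ∈ S, v j := by
    intro S; simp only [hv]; rw [Finset.sum_ite_mem]
  have hsJ : ∑ j ∈ J, u j = ∑ j, v j := by
    rw [← hsumv]; simp
  simp only [hsumv]
  rw [hsJ]
  have hexp : ∀ S : Finset (Fin d), Real.exp (-∑ j ∈ S, v j) = ∏ j ∈ S, Real.exp (-v j) := by
    intro S; rw [← Finset.sum_neg_distrib, Real.exp_sum]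
  simp only [hexp]
  have hmain := neg_corr d hd I (fun j => Real.exp (-v j))
    (fun j => ⟨(Real.exp_pos _).le, Real.exp_le_one_iff.mpr (by linarith [(hv0 j).1])⟩)
  have hp : δ₁ ≤ (I.card : ℝ) / d := by rw [le_div_iff₀ hd']; exact hI
  have hp1 : (I.card : ℝ) / d ≤ 1 := by
    rw [div_le_one hd']
    have := Finset.card_le_univ I
    simp only [Fintype.card_fin] at this
    exact_mod_cast this
  set p := (I.card : ℝ) / d
  have hfac : ∀ j, Real.exp (-v j) + (1 - Real.exp (-v j)) * (1 - p)
      ≤ Real.exp (-(δ₀ * δ₁ / (20 * M)) * v j) := by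
    intro j
    obtain ⟨h0, h1⟩ := hv0 j
    have hx : v j / (20 * M) ≤ 1 - Real.exp (-v j) := by
      have e1 : Real.exp (-v j) ≤ 1 / (1 + v j) := by
        rw [Real.exp_neg, ← one_div]
        exact one_div_le_one_div_of_le (by linarith) (by linarith [Real.add_one_le_exp (v j)])
      have e2 : v j / (20 * M) ≤ v j / (1 + v j) :=
        div_le_div_of_nonneg_left h0 (by linarith) (by linarith)
      have e3 : v j / (1 + v j) = 1 - 1 / (1 + v j) := by
        have : 1 + v j ≠ 0 := by linarith
        field_simp; ring
      linarith
    have hy : 0 ≤ v j / (20 * M) := by positivity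
    have hz : δ₀ * δ₁ * (v j / (20 * M)) ≤ p * (1 - Real.exp (-v j)) := by
      apply mul_le_mul _ hx hy (by linarith)
      nlinarith
    have ha := Real.add_one_le_exp (-(p * (1 - Real.exp (-v j))))
    calc _ = -(p * (1 - Real.exp (-v j))) + 1 := by ring
      _ ≤ _ := ha
      _ ≤ _ := by
        apply Real.exp_le_exp.mpr
        have : δ₀ * δ₁ / (20 * M) * v j = δ₀ * δ₁ * (v j / (20 * M)) := by ring
        linarith
  have hprod : ∏ j, (Real.exp (-v j) + (1 - Real.exp (-v j)) * (1 - p))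
      ≤ Real.exp (-(δ₀ * δ₁ / (20 * M)) * ∑ j, v j) := by
    rw [Finset.mul_sum, Real.exp_sum]
    refine Finset.prod_le_prod (fun j _ => ?_) (fun j _ => hfac j)
    have e1 : Real.exp (-v j) ≤ 1 := Real.exp_le_one_iff.mpr (by linarith [(hv0 j).1])
    have := mul_nonneg (sub_nonneg.mpr e1) (sub_nonneg.mpr hp1)
    linarith [Real.exp_pos (-v j)]
  rw [one_div, inv_mul_le_iff₀ hf]
  refine hmain.trans (mul_le_mul_of_nonneg_left ?_ hf.le)
  have := Real.exp_pos (-(δ₀ * δ₁ / (20 * M)) * ∑ j, v j)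
  linarith
end

section
/- For every n, d ∈ ℕ, every J ⊆ [d] with n ≤ |J|, and every ξ ∈ 𝕋^d, one has β_n^J(ξ) = Σ_{U ⊆ J} (Π_{i ∈ J∖U} cos²(π ξ_i))·(Π_{i ∈ U} sin²(π ξ_i))·kr_n^{(|J|)}(|U|), where kr is the Krawtchouk polynomial. -/
open Classical in
noncomputable def Dnj (d n : ℕ) (J : Finset (Fin d)) : Finset (Fin d → ℤ) :=
  (Finset.Icc (fun _ => (-1 : ℤ)) (fun _ => (1 : ℤ))).filter
    (fun y => (Finset.univ.filter (fun i => |y i| = 1)).card = n ∧ ∀ i, y i ≠ 0 → i ∈ J)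

noncomputable def betaMult (d n : ℕ) (J : Finset (Fin d)) (ξ : Fin d → ℝ) : ℂ :=
  ((Dnj d n J).card : ℂ)⁻¹ *
    ∑ y ∈ Dnj d n J, Complex.exp (2 * (Real.pi : ℂ) * Complex.I *
      ((∑ k, (y k : ℝ) * ξ k : ℝ) : ℂ))

/-- Generalized binomial coefficient `C(x, j) = x(x-1)⋯(x-j+1)/j!`. -/
noncomputable def genBinom (x : ℝ) (j : ℕ) : ℝ :=
  (∏ i ∈ Finset.range j, (x - i)) / (j.factorial : ℝ)

/-- The `k`-th Krawtchouk polynomial `kr_k^{(m)}(x)`. -/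
noncomputable def kraw (m k : ℕ) (x : ℝ) : ℝ :=
  ((m.choose k : ℝ))⁻¹ *
    ∑ j ∈ Finset.range (k + 1), (-1 : ℝ) ^ j * genBinom x j * genBinom ((m : ℝ) - x) (k - j)

open Polynomial in
theorem aux_D (d n : ℕ) (J : Finset (Fin d)) (ξ : Fin d → ℝ) :
    (1 / 2 : ℂ) ^ n * ∑ y ∈ Dnj d n J, Complex.exp (2 * (Real.pi : ℂ) * Complex.I *
      ((∑ k, (y k : ℝ) * ξ k : ℝ) : ℂ)) =
    (∏ i ∈ J, (1 + C ((Real.cos (2 * Real.pi * ξ i) : ℝ) : ℂ) * X)).coeff n := by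
  classical
  set f : Fin d → ℤ → ℂ[X] := fun i y => if y = 0 then 1 else
    C ((1 / 2 : ℂ) * Complex.exp (2 * (Real.pi : ℂ) * Complex.I * ((y : ℂ) * (ξ i : ℂ)))) * X
    with hf
  set t : Fin d → Finset ℤ := fun i => if i ∈ J then {-1, 0, 1} else {0} with ht
  have h1 : (∏ i ∈ J, (1 + C ((Real.cos (2 * Real.pi * ξ i) : ℝ) : ℂ) * X)) =
      ∏ i, ∑ y ∈ t i, f i y := by
    rw [← Finset.prod_subset (Finset.subset_univ J)]
    · refine Finset.prod_congr rfl fun i hi => ?_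
      simp only [ht, hi, if_true, hf]
      rw [Finset.sum_insert (by decide), Finset.sum_insert (by decide), Finset.sum_singleton]
      norm_num
      rw [Complex.cos]
      have e1 : 2 * (Real.pi : ℂ) * (ξ i) * Complex.I = 2 * Real.pi * Complex.I * ξ i := by ring
      have e2 : -(2 * (Real.pi : ℂ) * (ξ i)) * Complex.I = -(2 * Real.pi * Complex.I * ξ i) := by
        ring
      rw [e1, e2, add_left_comm, ← add_mul, ← mul_add, ← C_add, ← C_mul]
      congr 3
      ring_nf
    · intro i _ hi
      simp [ht, hi, hf]
  have h2 : ∀ y : Fin d → ℤ, ∏ i, f i (y i) =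
      C ((1 / 2 : ℂ) ^ (Finset.univ.filter (fun i => y i ≠ 0)).card *
        Complex.exp (2 * (Real.pi : ℂ) * Complex.I * ((∑ k, (y k : ℝ) * ξ k : ℝ) : ℂ))) *
      X ^ (Finset.univ.filter (fun i => y i ≠ 0)).card := by
    intro y
    simp only [hf]
    rw [Finset.prod_ite, Finset.prod_const_one, one_mul, Finset.prod_mul_distrib,
      Finset.prod_const, ← map_prod, Finset.prod_mul_distrib, Finset.prod_const,
      ← Complex.exp_sum, ← Finset.mul_sum]
    congr 5
    push_cast
    rw [Finset.sum_filter]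
    refine Finset.sum_congr rfl fun i _ => ?_
    by_cases h : y i = 0 <;> simp [h]
  have h3 : Dnj d n J = (Fintype.piFinset t).filter
      (fun y => (Finset.univ.filter (fun i => y i ≠ 0)).card = n) := by
    ext y
    have key : (∀ i, -1 ≤ y i ∧ y i ≤ 1) →
        (Finset.univ.filter (fun i => |y i| = 1)) = Finset.univ.filter (fun i => y i ≠ 0) := by
      intro h
      ext i
      have := h i
      simp only [Finset.mem_filter, Finset.mem_univ, true_and]
      grind
    have ht' : ∀ i, y i ∈ t i ↔ (-1 ≤ y i ∧ y i ≤ 1) ∧ (y i ≠ 0 → i ∈ J) := by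
      intro i
      simp only [ht]
      split_ifs with h
      · simp only [Finset.mem_insert, Finset.mem_singleton, h]
        grind
      · simp only [Finset.mem_singleton, h]
        grind
    simp only [Dnj, Finset.mem_filter, Finset.mem_Icc, Fintype.mem_piFinset, ht', forall_and,
      Pi.le_def]
    constructor
    · rintro ⟨⟨a, b⟩, c, e⟩
      rw [key fun i => ⟨a i, b i⟩] at c
      exact ⟨⟨⟨a, b⟩, e⟩, c⟩
    · rintro ⟨⟨⟨a, b⟩, e⟩, c⟩
      rw [← key fun i => ⟨a i, b i⟩] at c
      exact ⟨⟨a, b⟩, c, e⟩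
  rw [h1, Finset.prod_univ_sum, finsetSum_coeff, h3, Finset.sum_filter, Finset.mul_sum]
  refine Finset.sum_congr rfl fun y _ => ?_
  rw [h2, coeff_C_mul_X_pow]
  by_cases h : (Finset.univ.filter (fun i => y i ≠ 0)).card = n
  · rw [if_pos h, if_pos h.symm, h]
  · rw [if_neg h, if_neg (Ne.symm h), mul_zero]

theorem aux_binom (u j : ℕ) : genBinom (u : ℝ) j = (u.choose j : ℝ) := by
  rw [genBinom, Nat.cast_choose_eq_descPochhammer_div, descPochhammer_eval_eq_prod_range]

open Polynomial in
theorem aux_kraw (m k u : ℕ) (hk : k ≤ m) (hu : u ≤ m) :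
    (((1 + X : ℝ[X]) ^ (m - u) * (1 - X) ^ u).coeff k) = (m.choose k : ℝ) * kraw m k u := by
  have hc : (m.choose k : ℝ) ≠ 0 := by exact_mod_cast (Nat.choose_pos hk).ne'
  rw [kraw, mul_inv_cancel_left₀ hc, mul_comm, coeff_mul,
    Finset.Nat.sum_antidiagonal_eq_sum_range_succ_mk]
  refine Finset.sum_congr rfl fun j _ => ?_
  rw [← Nat.cast_sub hu, aux_binom, aux_binom, coeff_one_add_X_pow]
  congr 1
  have : (1 - X : ℝ[X]) ^ u = ((1 + X) ^ u).comp (C (-1) * X) := by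
    simp [sub_eq_add_neg]
  rw [this, comp_C_mul_X_coeff, coeff_one_add_X_pow, mul_comm]

open Polynomial in
theorem stmt13 (d n : ℕ) (hd : 0 < d) (hn : 0 < n) (J : Finset (Fin d))
    (hJ : n ≤ J.card) (ξ : Fin d → ℝ) :
    betaMult d n J ξ =
      ∑ U ∈ J.powerset,
        (((∏ i ∈ J \ U, Real.cos (Real.pi * ξ i) ^ 2) *
          (∏ i ∈ U, Real.sin (Real.pi * ξ i) ^ 2) *
          kraw J.card n (U.card : ℝ) : ℝ) : ℂ) := by
  have hc : (J.card.choose n : ℂ) ≠ 0 := by exact_mod_cast (Nat.choose_pos hJ).ne'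
  have hcard : (1 / 2 : ℂ) ^ n * (Dnj d n J).card = J.card.choose n := by
    have := aux_D d n J (fun _ => 0)
    simpa [coeff_one_add_X_pow] using this
  have h2 : ((1 / 2 : ℂ) ^ n) ≠ 0 := pow_ne_zero _ (by norm_num)
  have hD : ((Dnj d n J).card : ℂ) ≠ 0 := by
    intro h
    rw [h, mul_zero] at hcard
    exact hc hcard.symm
  have hR : (∏ i ∈ J, (1 + C (Real.cos (2 * Real.pi * ξ i)) * X)).coeff n =
      J.card.choose n * ∑ U ∈ J.powerset, ((∏ i ∈ J \ U, Real.cos (Real.pi * ξ i) ^ 2) *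
          (∏ i ∈ U, Real.sin (Real.pi * ξ i) ^ 2) * kraw J.card n (U.card : ℝ)) := by
    have e : ∀ i ∈ J, (1 + C (Real.cos (2 * Real.pi * ξ i)) * X : ℝ[X]) =
        C (Real.sin (Real.pi * ξ i) ^ 2) * (1 - X) +
        C (Real.cos (Real.pi * ξ i) ^ 2) * (1 + X) := by
      intro i _
      have a : Real.cos (2 * Real.pi * ξ i) =
          Real.cos (Real.pi * ξ i) ^ 2 - Real.sin (Real.pi * ξ i) ^ 2 := by
        rw [mul_assoc, Real.cos_two_mul']
      have b : (1 : ℝ[X]) = C (Real.sin (Real.pi * ξ i) ^ 2) + C (Real.cos (Real.pi * ξ i) ^ 2) := by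
        rw [← C_add, Real.sin_sq_add_cos_sq, C_1]
      rw [a, C_sub]
      linear_combination b
    rw [Finset.prod_congr rfl e, Finset.prod_add, finsetSum_coeff, Finset.mul_sum]
    refine Finset.sum_congr rfl fun U hU => ?_
    have hU := Finset.mem_powerset.1 hU
    rw [Finset.prod_mul_distrib, Finset.prod_mul_distrib, Finset.prod_const, Finset.prod_const,
      ← map_prod, ← map_prod, mul_mul_mul_comm, ← C_mul, coeff_C_mul, mul_comm ((1 - X) ^ _),
      Finset.card_sdiff_of_subset hU, aux_kraw _ _ _ hJ (Finset.card_le_card hU)]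
    ring
  have hmap : (∏ i ∈ J, (1 + C ((Real.cos (2 * Real.pi * ξ i) : ℝ) : ℂ) * X)).coeff n =
      (((∏ i ∈ J, (1 + C (Real.cos (2 * Real.pi * ξ i)) * X)).coeff n : ℝ) : ℂ) := by
    rw [← Complex.ofRealHom_eq_coe, ← coeff_map, Polynomial.map_prod]
    simp
  have hA := aux_D d n J ξ
  rw [hmap, hR] at hA
  rw [betaMult, ← Complex.ofReal_sum]
  apply mul_left_cancel₀ hc
  push_cast at hA ⊢
  rw [← hA, ← hcard]
  field_simp
end
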